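/- arXiv:2111.08854 — 2 statements merged into one kernel-verified Lean document; each statement's English description precedes it below -/
import Mathlib

section
/- Let A, C ∈ ℝ^{n×n}, B, D ∈ ℝ^{n×m}, P, Q ∈ S^n, S ∈ ℝ^{n×m}, and let R ∈ S^m be invertible. Let E : Θ → ℝ^{n×n} and F : Θ → ℝ^{n×m} be measurable with ∫|E(θ)|²ν(dθ) < ∞ and ∫|F(θ)|²ν(dθ) < ∞. Assume Σ₀ := R + DᵀP D + ∫F(θ)ᵀP F(θ)ν(dθ) is invertible. Define A₁ := A − B R⁻¹Sᵀ, C₁ := C − D R⁻¹Sᵀ, E₁(θ) := E(θ) − F(θ)R⁻¹Sᵀ, Q₁ := Q − S R⁻¹Sᵀ. Then P A + AᵀP + CᵀP C + ∫EᵀP E dν + Q − (S + P B + CᵀP D + ∫EᵀP F dν) Σ₀⁻¹ (Sᵀ + BᵀP + DᵀP C + ∫FᵀP E dν) = P A₁ + A₁ᵀP + C₁ᵀP C₁ + ∫E₁ᵀP E₁ dν + Q₁ − (P B + C₁ᵀP D + ∫E₁ᵀP F dν) Σ₀⁻¹ (BᵀP + DᵀP C₁ + ∫FᵀP E₁ dν).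 (Part 1 of Lemma 3.3: the Riccati equations (3.2) for Problem MF and (3.8) for Problem NC are the same.) -/
open Matrix MeasureTheory

noncomputable section

/-- Entrywise (Bochner) integral of a matrix-valued function. -/
def matInt {Θ : Type*} [MeasurableSpace Θ] (ν : Measure Θ) {p q : ℕ}
    (M : Θ → Matrix (Fin p) (Fin q) ℝ) : Matrix (Fin p) (Fin q) ℝ :=
  Matrix.of fun i j => ∫ θ, M θ i j ∂ν

/-!
Regard the data as the bilinear form in state and control `(x, u)` with matrix `[[M, N], [N', Σ₀]]`,
where `M = PA + AᵀP + CᵀPC + ∫EᵀPE + Q`, `N = S + PB + CᵀPD + ∫EᵀPF` and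
`N' = Sᵀ + BᵀP + DᵀPC + ∫FᵀPE`; the Riccati generator is the Schur complement of `Σ₀`. The
substitution `u = v - Kx` acts on the coefficients by `A ↦ A - BK`, `C ↦ C - DK`, `E ↦ E - FK`, and
on the form by a unipotent congruence, which keeps the Schur complement. The choice `K = R⁻¹Sᵀ`
completes the square in the running cost, so it replaces `S` by `0` and `Q` by `Q - SR⁻¹Sᵀ`.
-/

theorem schur_complement_shear {α k l l' : Type*} [CommRing α] [Fintype k] [DecidableEq k]
    (M : Matrix l l' α) (N : Matrix l k α) (N' : Matrix k l' α) {Γ : Matrix k k α}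
    (hΓ : IsUnit Γ.det) (L : Matrix l k α) (K : Matrix k l' α) :
    M - N * K - L * (N' - Γ * K) - (N - L * Γ) * Γ⁻¹ * (N' - Γ * K) = M - N * Γ⁻¹ * N' := by
  have hL : (N - L * Γ) * Γ⁻¹ = N * Γ⁻¹ - L := by
    rw [Matrix.sub_mul, mul_nonsing_inv_cancel_right _ _ hΓ]
  have hK : N * Γ⁻¹ * (N' - Γ * K) = N * Γ⁻¹ * N' - N * K := by
    rw [Matrix.mul_sub, ← Matrix.mul_assoc _ Γ, nonsing_inv_mul_cancel_right _ _ hΓ]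
  rw [hL, Matrix.sub_mul, hK]
  abel

section MatrixIntegral

variable {Θ : Type*} [MeasurableSpace Θ] {ν : Measure Θ} {p q r : ℕ}

theorem matInt_transpose (M : Θ → Matrix (Fin p) (Fin q) ℝ) :
    (matInt ν M)ᵀ = matInt ν fun θ => (M θ)ᵀ := rfl

theorem matInt_sub {M N : Θ → Matrix (Fin p) (Fin q) ℝ}
    (hM : ∀ i j, Integrable (fun θ => M θ i j) ν) (hN : ∀ i j, Integrable (fun θ => N θ i j) ν) :
    matInt ν (fun θ => M θ - N θ) = matInt ν M - matInt ν N := by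
  ext i j
  exact integral_sub (hM i j) (hN i j)

theorem integrable_mul_const_apply {M : Θ → Matrix (Fin p) (Fin q) ℝ}
    (hM : ∀ i j, Integrable (fun θ => M θ i j) ν) (K : Matrix (Fin q) (Fin r) ℝ)
    (i : Fin p) (j : Fin r) : Integrable (fun θ => (M θ * K) i j) ν := by
  simp only [Matrix.mul_apply]
  exact integrable_finsetSum _ fun k _ => (hM i k).mul_const _

theorem matInt_mul_const {M : Θ → Matrix (Fin p) (Fin q) ℝ}
    (hM : ∀ i j, Integrable (fun θ => M θ i j) ν) (K : Matrix (Fin q) (Fin r) ℝ) :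
    matInt ν (fun θ => M θ * K) = matInt ν M * K := by
  ext i j
  simp only [matInt, Matrix.mul_apply, of_apply]
  rw [integral_finsetSum _ fun k _ => (hM i k).mul_const _]
  simp only [integral_mul_const]

end MatrixIntegral

section SquareIntegrable

variable {Θ ι κ κ' : Type*} [MeasurableSpace Θ] {ν : Measure Θ}

theorem memLp_two_apply_of_integrable_sum_sq [Fintype ι] [Fintype κ] {M : Θ → Matrix ι κ ℝ}
    (hmeas : ∀ i j, AEStronglyMeasurable (fun θ => M θ i j) ν)
    (hsq : Integrable (fun θ => ∑ i, ∑ j, M θ i j ^ 2) ν) (i : ι) (j : κ) :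
    MemLp (fun θ => M θ i j) 2 ν := by
  rw [memLp_two_iff_integrable_sq (hmeas i j)]
  refine hsq.mono' ((hmeas i j).pow 2) (.of_forall fun θ => ?_)
  rw [Real.norm_of_nonneg (sq_nonneg _)]
  calc M θ i j ^ 2 ≤ ∑ j, M θ i j ^ 2 :=
        Finset.single_le_sum (f := fun j => M θ i j ^ 2) (fun _ _ => sq_nonneg _)
          (Finset.mem_univ j)
    _ ≤ ∑ i, ∑ j, M θ i j ^ 2 :=
        Finset.single_le_sum (f := fun i => ∑ j, M θ i j ^ 2)
          (fun _ _ => Finset.sum_nonneg fun _ _ => sq_nonneg _) (Finset.mem_univ i)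

theorem memLp_sub_mul_const_apply [Fintype κ'] {s : ENNReal} {M : Θ → Matrix ι κ ℝ}
    {N : Θ → Matrix ι κ' ℝ} (hM : ∀ i j, MemLp (fun θ => M θ i j) s ν)
    (hN : ∀ i j, MemLp (fun θ => N θ i j) s ν) (K : Matrix κ' κ ℝ) (i : ι) (j : κ) :
    MemLp (fun θ => (M θ - N θ * K) i j) s ν := by
  simp only [Matrix.sub_apply, Matrix.mul_apply]
  exact (hM i j).sub (memLp_finsetSum _ fun k _ => (hN i k).mul_const _)

theorem integrable_transpose_mul_mul_apply {ι' : Type*} [Fintype ι] [Fintype ι']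
    {M : Θ → Matrix ι κ ℝ} {N : Θ → Matrix ι' κ' ℝ} (hM : ∀ i j, MemLp (fun θ => M θ i j) 2 ν)
    (hN : ∀ i j, MemLp (fun θ => N θ i j) 2 ν) (P : Matrix ι ι' ℝ) (i : κ) (j : κ') :
    Integrable (fun θ => ((M θ)ᵀ * P * N θ) i j) ν := by
  simp only [Matrix.mul_apply, transpose_apply, Finset.sum_mul]
  refine integrable_finsetSum _ fun k _ => integrable_finsetSum _ fun l _ => ?_
  simpa only [Pi.mul_apply, mul_right_comm] using
    ((hM l i).integrable_mul (hN k j)).mul_const (P l k)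

end SquareIntegrable

section NoiseGram

variable {Θ : Type*} [MeasurableSpace Θ] {ν : Measure Θ} {n n' p q r : ℕ}

/-- The contribution `CᵀPD + ∫ EᵀPF dν` of the noise to the generator: the `P`-pairing of the
coefficients `(C, E)` with `(D, F)`, where `C`, `D` multiply the Brownian noise and `E`, `F` the
jumps. -/
def noiseGram (ν : Measure Θ) (P : Matrix (Fin n) (Fin n') ℝ)
    (C : Matrix (Fin n) (Fin p) ℝ) (E : Θ → Matrix (Fin n) (Fin p) ℝ)
    (D : Matrix (Fin n') (Fin q) ℝ) (F : Θ → Matrix (Fin n') (Fin q) ℝ) :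
    Matrix (Fin p) (Fin q) ℝ :=
  Cᵀ * P * D + matInt ν fun θ => (E θ)ᵀ * P * F θ

theorem noiseGram_transpose (P : Matrix (Fin n) (Fin n') ℝ)
    (C : Matrix (Fin n) (Fin p) ℝ) (E : Θ → Matrix (Fin n) (Fin p) ℝ)
    (D : Matrix (Fin n') (Fin q) ℝ) (F : Θ → Matrix (Fin n') (Fin q) ℝ) :
    (noiseGram ν P C E D F)ᵀ = noiseGram ν Pᵀ D F C E := by
  simp only [noiseGram, transpose_add, matInt_transpose, transpose_mul, transpose_transpose,
    Matrix.mul_assoc]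

theorem noiseGram_sub_mul_right {E : Θ → Matrix (Fin n) (Fin p) ℝ}
    {F : Θ → Matrix (Fin n') (Fin q) ℝ} {G : Θ → Matrix (Fin n') (Fin r) ℝ}
    (hE : ∀ i j, MemLp (fun θ => E θ i j) 2 ν) (hF : ∀ i j, MemLp (fun θ => F θ i j) 2 ν)
    (hG : ∀ i j, MemLp (fun θ => G θ i j) 2 ν) (P : Matrix (Fin n) (Fin n') ℝ)
    (X : Matrix (Fin n) (Fin p) ℝ) (Y : Matrix (Fin n') (Fin q) ℝ) (Z : Matrix (Fin n') (Fin r) ℝ)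
    (K : Matrix (Fin r) (Fin q) ℝ) :
    noiseGram ν P X E (Y - Z * K) (fun θ => F θ - G θ * K)
      = noiseGram ν P X E Y F - noiseGram ν P X E Z G * K := by
  have hEF := integrable_transpose_mul_mul_apply hE hF P
  have hEG := integrable_transpose_mul_mul_apply hE hG P
  simp only [noiseGram, Matrix.mul_sub, ← Matrix.mul_assoc]
  rw [matInt_sub hEF (integrable_mul_const_apply hEG K), matInt_mul_const hEG, Matrix.add_mul]
  abel

theorem noiseGram_sub_mul_left {E : Θ → Matrix (Fin n) (Fin p) ℝ}
    {F : Θ → Matrix (Fin n) (Fin r) ℝ} {G : Θ → Matrix (Fin n') (Fin q) ℝ}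
    (hE : ∀ i j, MemLp (fun θ => E θ i j) 2 ν) (hF : ∀ i j, MemLp (fun θ => F θ i j) 2 ν)
    (hG : ∀ i j, MemLp (fun θ => G θ i j) 2 ν) (P : Matrix (Fin n) (Fin n') ℝ)
    (X : Matrix (Fin n) (Fin p) ℝ) (Y : Matrix (Fin n) (Fin r) ℝ) (Z : Matrix (Fin n') (Fin q) ℝ)
    (K : Matrix (Fin r) (Fin p) ℝ) :
    noiseGram ν P (X - Y * K) (fun θ => E θ - F θ * K) Z G
      = noiseGram ν P X E Z G - Kᵀ * noiseGram ν P Y F Z G := by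
  apply transpose_injective
  simp only [transpose_sub, transpose_mul, noiseGram_transpose, transpose_transpose,
    noiseGram_sub_mul_right hG hE hF]

end NoiseGram

section RiccatiGenerator

variable {Θ : Type*} [MeasurableSpace Θ] {ν : Measure Θ} {n m : ℕ}

/-- The effective control weight `Σ₀ = R + DᵀPD + ∫ FᵀPF dν` at `P`: the running cost `R` together
with the cost of the noise excited by the control. The generator divides by it. -/
def controlWeight (ν : Measure Θ) (P : Matrix (Fin n) (Fin n) ℝ) (D : Matrix (Fin n) (Fin m) ℝ)
    (F : Θ → Matrix (Fin n) (Fin m) ℝ) (R : Matrix (Fin m) (Fin m) ℝ) :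
    Matrix (Fin m) (Fin m) ℝ :=
  R + noiseGram ν P D F D F

/-- The generator at `P` of the Riccati equation of the linear-quadratic problem with state
coefficients `A`, `C`, `E`, control coefficients `B`, `D`, `F` and running cost
`⟨Qx, x⟩ + 2⟨Su, x⟩ + ⟨Ru, u⟩`. The second cross factor is written out because it is the transpose
of the first only for symmetric `P`. -/
def riccatiGenerator (ν : Measure Θ) (P A : Matrix (Fin n) (Fin n) ℝ)
    (B : Matrix (Fin n) (Fin m) ℝ) (C : Matrix (Fin n) (Fin n) ℝ) (D : Matrix (Fin n) (Fin m) ℝ)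
    (E : Θ → Matrix (Fin n) (Fin n) ℝ) (F : Θ → Matrix (Fin n) (Fin m) ℝ)
    (Q : Matrix (Fin n) (Fin n) ℝ) (S : Matrix (Fin n) (Fin m) ℝ) (R : Matrix (Fin m) (Fin m) ℝ) :
    Matrix (Fin n) (Fin n) ℝ :=
  P * A + Aᵀ * P + noiseGram ν P C E C E + Q
    - (S + P * B + noiseGram ν P C E D F) * (controlWeight ν P D F R)⁻¹
      * (Sᵀ + Bᵀ * P + noiseGram ν P D F C E)

variable {P : Matrix (Fin n) (Fin n) ℝ} {D S : Matrix (Fin n) (Fin m) ℝ}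
  {R : Matrix (Fin m) (Fin m) ℝ} {E : Θ → Matrix (Fin n) (Fin n) ℝ}
  {F : Θ → Matrix (Fin n) (Fin m) ℝ}
  (A C Q : Matrix (Fin n) (Fin n) ℝ) (B : Matrix (Fin n) (Fin m) ℝ)

theorem riccatiGenerator_feedback (hR : R.IsSymm) (hE : ∀ i j, MemLp (fun θ => E θ i j) 2 ν)
    (hF : ∀ i j, MemLp (fun θ => F θ i j) 2 ν) (hW : IsUnit (controlWeight ν P D F R).det)
    (S : Matrix (Fin n) (Fin m) ℝ) (K : Matrix (Fin m) (Fin n) ℝ) :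
    riccatiGenerator ν P (A - B * K) B (C - D * K) D (fun θ => E θ - F θ * K) F
        (Q - S * K - Kᵀ * (Sᵀ - R * K)) (S - Kᵀ * R) R
      = riccatiGenerator ν P A B C D E F Q S R := by
  have left_cross : S - Kᵀ * R + P * B + noiseGram ν P (C - D * K) (fun θ => E θ - F θ * K) D F
      = S + P * B + noiseGram ν P C E D F - Kᵀ * controlWeight ν P D F R := by
    rw [noiseGram_sub_mul_left hE hF hF, controlWeight, Matrix.mul_add]
    abel
  have right_cross : (S - Kᵀ * R)ᵀ + Bᵀ * P
        + noiseGram ν P D F (C - D * K) (fun θ => E θ - F θ * K)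
      = Sᵀ + Bᵀ * P + noiseGram ν P D F C E - controlWeight ν P D F R * K := by
    rw [noiseGram_sub_mul_right hF hE hF, controlWeight, Matrix.add_mul, transpose_sub,
      transpose_mul, transpose_transpose, hR.eq]
    abel
  have state : P * (A - B * K) + (A - B * K)ᵀ * P
        + noiseGram ν P (C - D * K) (fun θ => E θ - F θ * K) (C - D * K) (fun θ => E θ - F θ * K)
        + (Q - S * K - Kᵀ * (Sᵀ - R * K))
      = P * A + Aᵀ * P + noiseGram ν P C E C E + Q - (S + P * B + noiseGram ν P C E D F) * K
        - Kᵀ * (Sᵀ + Bᵀ * P + noiseGram ν P D F C E - controlWeight ν P D F R * K) := by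
    rw [noiseGram_sub_mul_left hE hF (memLp_sub_mul_const_apply hE hF K),
      noiseGram_sub_mul_right hE hE hF, noiseGram_sub_mul_right hF hE hF, controlWeight]
    simp only [transpose_sub, transpose_mul, Matrix.mul_sub, Matrix.sub_mul, Matrix.mul_add,
      Matrix.add_mul, Matrix.mul_assoc]
    abel
  rw [riccatiGenerator, state, left_cross, right_cross,
    schur_complement_shear _ _ _ hW, riccatiGenerator]

theorem riccati_generators_eq_general (hR : R.IsSymm)
    (hE : ∀ i j, MemLp (fun θ => E θ i j) 2 ν) (hF : ∀ i j, MemLp (fun θ => F θ i j) 2 ν)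
    (hW : IsUnit (controlWeight ν P D F R).det) {K : Matrix (Fin m) (Fin n) ℝ} (hK : R * K = Sᵀ) :
    riccatiGenerator ν P A B C D E F Q S R
      = riccatiGenerator ν P (A - B * K) B (C - D * K) D (fun θ => E θ - F θ * K) F
        (Q - S * K) 0 R := by
  have hS : Kᵀ * R = S := by rw [← S.transpose_transpose, ← hK, transpose_mul, hR.eq]
  rw [← riccatiGenerator_feedback A C Q B hR hE hF hW S K, hK, hS, sub_self, sub_self,
    Matrix.mul_zero, sub_zero]

end RiccatiGenerator

/-- Part 1 of Lemma 3.3: the Riccati equation (3.2) for Problem MF and the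
Riccati equation (3.8) for Problem NC have the same right-hand side. -/
theorem riccati_generators_eq
    {n m : ℕ} (hn : 0 < n) (hm : 0 < m)
    {Θ : Type*} [MeasurableSpace Θ] (ν : Measure Θ)
    (A C : Matrix (Fin n) (Fin n) ℝ) (B D : Matrix (Fin n) (Fin m) ℝ)
    (P Q : Matrix (Fin n) (Fin n) ℝ) (hP : P.IsSymm) (hQ : Q.IsSymm)
    (S : Matrix (Fin n) (Fin m) ℝ)
    (R : Matrix (Fin m) (Fin m) ℝ) (hR : R.IsSymm) (hRinv : IsUnit R.det)
    (E : Θ → Matrix (Fin n) (Fin n) ℝ) (F : Θ → Matrix (Fin n) (Fin m) ℝ)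
    (hEmeas : ∀ i j, Measurable fun θ => E θ i j)
    (hFmeas : ∀ i j, Measurable fun θ => F θ i j)
    (hE2 : Integrable (fun θ => ∑ i, ∑ j, (E θ i j) ^ 2) ν)
    (hF2 : Integrable (fun θ => ∑ i, ∑ j, (F θ i j) ^ 2) ν)
    (Sg0 : Matrix (Fin m) (Fin m) ℝ)
    (hSg0 : Sg0 = R + Dᵀ * P * D + matInt ν (fun θ => (F θ)ᵀ * P * F θ))
    (hSg0inv : IsUnit Sg0.det)
    (A₁ C₁ : Matrix (Fin n) (Fin n) ℝ) (hA₁ : A₁ = A - B * R⁻¹ * Sᵀ)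
    (hC₁ : C₁ = C - D * R⁻¹ * Sᵀ)
    (E₁ : Θ → Matrix (Fin n) (Fin n) ℝ)
    (hE₁ : ∀ θ, E₁ θ = E θ - F θ * R⁻¹ * Sᵀ)
    (Q₁ : Matrix (Fin n) (Fin n) ℝ) (hQ₁ : Q₁ = Q - S * R⁻¹ * Sᵀ) :
    P * A + Aᵀ * P + Cᵀ * P * C + matInt ν (fun θ => (E θ)ᵀ * P * E θ) + Q
      - (S + P * B + Cᵀ * P * D + matInt ν (fun θ => (E θ)ᵀ * P * F θ)) * Sg0⁻¹
        * (Sᵀ + Bᵀ * P + Dᵀ * P * C + matInt ν (fun θ => (F θ)ᵀ * P * E θ))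
      = P * A₁ + A₁ᵀ * P + C₁ᵀ * P * C₁ + matInt ν (fun θ => (E₁ θ)ᵀ * P * E₁ θ) + Q₁
        - (P * B + C₁ᵀ * P * D + matInt ν (fun θ => (E₁ θ)ᵀ * P * F θ)) * Sg0⁻¹
          * (Bᵀ * P + Dᵀ * P * C₁ + matInt ν (fun θ => (F θ)ᵀ * P * E₁ θ)) := by
  obtain rfl : E₁ = fun θ => E θ - F θ * (R⁻¹ * Sᵀ) := by
    simpa only [Matrix.mul_assoc] using funext hE₁
  subst hA₁ hC₁ hQ₁ hSg0
  have hE := memLp_two_apply_of_integrable_sum_sq (fun i j => (hEmeas i j).aestronglyMeasurable) hE2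
  have hF := memLp_two_apply_of_integrable_sum_sq (fun i j => (hFmeas i j).aestronglyMeasurable) hF2
  rw [add_assoc] at hSg0inv
  simpa only [riccatiGenerator, controlWeight, noiseGram, transpose_zero, zero_add, ← add_assoc,
    ← Matrix.mul_assoc] using riccati_generators_eq_general A C Q B hR hE hF hSg0inv
      (mul_nonsing_inv_cancel_left R Sᵀ hRinv)
end
end

section
/- Let a, b, r, μ, σ, λ, λ' be real numbers with σ ≠ 0 and λ > 0, and suppose λ' = [((μ−r)/σ)² − 2r]·λ + [r − a + b(μ−r)/σ]²·λ² (the scalar Riccati relation satisfied by the function λ of Example 5.4 and its derivative). Set m := r − a + b(μ−r)/σ. Define the 2×2 symmetric matrix Q^H := [[1 + b²λ, (r−a)λ], [(r−a)λ, 1 + λ' + 2rλ]], the column vector S^H := (−bσλ, (μ−r)λ)ᵀ ∈ ℝ², and the scalar R^H := λσ² > 0. Then Q^H − (1/R^H)·S^H (S^H)ᵀ = [[1, mλ], [mλ, 1 + m²λ²]], and this matrix is positive definite (its determinant equals 1 and its upper-left entry equals 1). (This is the verification in Example 5.4 that, with H = diag(0, λ) and K = 0, the Schur complement condition of Assumption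 (S) holds for the equivalent cost functional J^{HK} of the asset-liability management problem, even though the original problem has R = 0.) -/
open Matrix

/-! The column `S` is `λσ` times `v = (-b, θ)ᵀ` with `θ = (μ - r) / σ`, so subtracting
`R⁻¹ S Sᵀ = λ v vᵀ` from `Q` removes `b²λ` and `θ²λ` from the diagonal, and the Riccati relation
leaves `1 + m²λ²` in the lower right corner. The result has the Cholesky factorization `Lᵀ L` with
`L` the unipotent matrix `[[1, mλ], [0, 1]]`, hence is positive definite of determinant one. -/

section Transvection

variable {n R : Type*} [Fintype n] [DecidableEq n] [CommRing R] [StarRing R]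

theorem det_conjTranspose_transvection_mul_self {i j : n} (hij : i ≠ j) (c : R) :
    ((transvection i j c)ᴴ * transvection i j c).det = 1 := by
  rw [det_mul, det_conjTranspose, det_transvection_of_ne i j hij, star_one, mul_one]

theorem posDef_conjTranspose_transvection_mul_self [PartialOrder R] [StarOrderedRing R]
    [NoZeroDivisors R] {i j : n} (hij : i ≠ j) (c : R) :
    ((transvection i j c)ᴴ * transvection i j c).PosDef := by
  have hunit : IsUnit (transvection i j c) := by
    rw [isUnit_iff_isUnit_det, det_transvection_of_ne i j hij]
    exact isUnit_one
  exact .conjTranspose_mul_self _ (mulVec_injective_of_isUnit hunit)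

theorem conjTranspose_transvection_mul_self_fin_two (c : R) :
    (transvection (0 : Fin 2) 1 c)ᴴ * transvection 0 1 c =
      !![1, c; star c, 1 + star c * c] := by
  have htransvection : transvection (0 : Fin 2) 1 c = !![1, c; 0, 1] := by
    ext i j
    fin_cases i <;> fin_cases j <;> simp [transvection]
  rw [htransvection]
  ext i j
  fin_cases i <;> fin_cases j <;> simp [mul_apply, add_comm]

end Transvection

theorem one_div_smul_smul_mul_transpose_smul {m n K : Type*} [Fintype n] [Field K] (l : K) {σ : K}
    (hσ : σ ≠ 0) (V : Matrix m n K) :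
    (1 / (l * σ ^ 2)) • (((l * σ) • V) * ((l * σ) • V)ᵀ) = l • (V * Vᵀ) := by
  have hscalar : 1 / (l * σ ^ 2) * (l * σ) * (l * σ) = l := by
    field_simp
  rw [transpose_smul, Matrix.smul_mul, Matrix.mul_smul, smul_smul, smul_smul, hscalar]

theorem sub_smul_mul_transpose_of_riccati {R : Type*} [CommRing R] {b p r θ l l' m : R}
    (hl' : l' = (θ ^ 2 - 2 * r) * l + m ^ 2 * l ^ 2) (hm : m = p + b * θ) :
    !![1 + b ^ 2 * l, p * l; p * l, 1 + l' + 2 * r * l] -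
        l • (!![-b; θ] * (!![-b; θ] : Matrix (Fin 2) (Fin 1) R)ᵀ) =
      !![1, m * l; m * l, 1 + m ^ 2 * l ^ 2] := by
  have hrankOne : !![-b; θ] * (!![-b; θ] : Matrix (Fin 2) (Fin 1) R)ᵀ =
      !![b ^ 2, -(b * θ); -(b * θ), θ ^ 2] := by
    ext i j
    fin_cases i <;> fin_cases j <;> simp [vecMul, dotProduct] <;> ring
  rw [hrankOne]
  ext i j
  fin_cases i <;> fin_cases j <;> simp [hl', hm] <;> ring

/-- Example 5.4: with `H = diag(0, λ)` and `K = 0`, the Schur complement of the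
transformed cost data of the equivalent cost functional `J^{HK}` equals
`[[1, mλ], [mλ, 1 + m²λ²]]`, which is positive definite (its determinant equals 1
and its upper-left entry equals 1), verifying Assumption (S) for the
asset-liability management problem even though the original problem has `R = 0`.
Here `l` and `l'` play the roles of `λ` and `λ̇`. -/
theorem example_5_4_schur_complement
    (a b r μ σ l l' m : ℝ) (hσ : σ ≠ 0) (hl : 0 < l)
    (hl' : l' = (((μ - r) / σ) ^ 2 - 2 * r) * l + (r - a + b * (μ - r) / σ) ^ 2 * l ^ 2)
    (hm : m = r - a + b * (μ - r) / σ)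
    (QH : Matrix (Fin 2) (Fin 2) ℝ)
    (hQH : QH = !![1 + b ^ 2 * l, (r - a) * l; (r - a) * l, 1 + l' + 2 * r * l])
    (SH : Matrix (Fin 2) (Fin 1) ℝ)
    (hSH : SH = !![-b * σ * l; (μ - r) * l])
    (RH : ℝ) (hRH : RH = l * σ ^ 2) :
    0 < RH
    ∧ QH - (1 / RH) • (SH * SHᵀ) = !![1, m * l; m * l, 1 + m ^ 2 * l ^ 2]
    ∧ (QH - (1 / RH) • (SH * SHᵀ)).PosDef
    ∧ (QH - (1 / RH) • (SH * SHᵀ)).det = 1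
    ∧ (QH - (1 / RH) • (SH * SHᵀ)) 0 0 = 1 := by
  have hSH' : SH = (l * σ) • !![-b; (μ - r) / σ] := by
    rw [hSH]
    ext i j
    fin_cases i <;> fin_cases j <;> simp <;> field_simp
  have hm' : m = r - a + b * ((μ - r) / σ) := by rw [hm, mul_div_assoc]
  have hschur : QH - (1 / RH) • (SH * SHᵀ) = !![1, m * l; m * l, 1 + m ^ 2 * l ^ 2] := by
    rw [hQH, hSH', hRH, one_div_smul_smul_mul_transpose_smul l hσ]
    exact sub_smul_mul_transpose_of_riccati (hm ▸ hl') hm'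
  have hcholesky : QH - (1 / RH) • (SH * SHᵀ) =
      (transvection 0 1 (m * l))ᴴ * transvection 0 1 (m * l) := by
    rw [hschur, conjTranspose_transvection_mul_self_fin_two, star_trivial, ← sq, mul_pow]
  refine ⟨by rw [hRH]; positivity, hschur, ?_, ?_, by rw [hschur]; rfl⟩
  · exact hcholesky ▸ posDef_conjTranspose_transvection_mul_self zero_ne_one (m * l)
  · exact hcholesky ▸ det_conjTranspose_transvection_mul_self zero_ne_one (m * l)
end
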